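/- Let Q̂ be a symmetric d×d real matrix with zero diagonal, let Ψ be a finite set of ordered triples (i,j,k) of pairwise distinct indices in {1, …, d}, and let η = (η_{ijk})_{(i,j,k)∈Ψ} be nonnegative reals. Define the matrix Q(η) by Q(η)_{ab} = Q̂_{ab} + ∑_{(i,j,k)∈Ψ} η_{ijk}·(1 if {a,b} = {i,j}, −1 if {a,b} = {i,k}, −1 if {a,b} = {j,k}, 0 otherwise), symmetrically for a ≠ b with zero diagonal. Suppose Q(η) ∈ 𝒬. Then the Lagrangian L(Γ, η) = ⟨Γ, Q̂⟩ − log det(CM(Γ)) + ∑_{(i,j,k)∈Ψ} η_{ijk}(Γ_{ij} − Γ_{ik} − Γ_{jk}), viewed as a function of Γ on the cone 𝒞^d of strictly conditionally negative definite symmetric matrices with zero diagonal, attains its infimum uniquely at Γ = Γ(Q(η)), and the infimum value equals log τ(Q(η)) + (d − 1). -/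

import Mathlib

open Matrix Finset

/-- `Θ(Q)`: `Θ(Q)_{ij} = −Q_{ij}` for `i ≠ j` and `Θ(Q)_{ii} = ∑_{j≠i} Q_{ij}`. -/
noncomputable def thetaOf {d : ℕ} (Q : Matrix (Fin d) (Fin d) ℝ) :
    Matrix (Fin d) (Fin d) ℝ :=
  Matrix.of fun i j => if i = j then ∑ l ∈ univ.filter (fun l => l ≠ i), Q i l else -Q i j

/-- Membership in `𝒬`: symmetric, zero diagonal, and `xᵀΘ(Q)x > 0` for every nonzero
`x` with `∑ᵢ xᵢ = 0`. -/
def memQ {d : ℕ} (Q : Matrix (Fin d) (Fin d) ℝ) : Prop :=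
  Q.IsSymm ∧ (∀ i, Q i i = 0) ∧
    ∀ x : Fin d → ℝ, x ≠ 0 → (∑ i, x i) = 0 → 0 < x ⬝ᵥ (thetaOf Q).mulVec x

/-- The centering matrix `P = I − (1/d)𝟙𝟙ᵀ`. -/
noncomputable def Pmat (d : ℕ) : Matrix (Fin d) (Fin d) ℝ :=
  1 - ((d : ℝ)⁻¹) • Matrix.of (fun _ _ : Fin d => (1 : ℝ))

/-- `S` is the matrix `Σ(Q)`: the unique symmetric matrix with `Σ(Q)𝟙 = 0` and
`Θ(Q)Σ(Q) = P`. -/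
def isSigmaOf {d : ℕ} (Q S : Matrix (Fin d) (Fin d) ℝ) : Prop :=
  S.IsSymm ∧ S.mulVec (fun _ => 1) = 0 ∧ thetaOf Q * S = Pmat d

/-- The variogram associated with `Σ`: `Γ_{ij} = Σ_{ii} + Σ_{jj} − 2Σ_{ij}`. -/
noncomputable def gammaOf {d : ℕ} (S : Matrix (Fin d) (Fin d) ℝ) :
    Matrix (Fin d) (Fin d) ℝ :=
  Matrix.of fun i j => S i i + S j j - 2 * S i j

/-- The inner product `⟨A, B⟩ = ∑_{i<j} A_{ij} B_{ij}` on symmetric matrices with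
zero diagonal. -/
noncomputable def sinner {d : ℕ} (A B : Matrix (Fin d) (Fin d) ℝ) : ℝ :=
  ∑ p ∈ univ.filter (fun p : Fin d × Fin d => p.1 < p.2), A p.1 p.2 * B p.1 p.2

open Classical in
/-- The spanning tree polynomial `τ(Q) = ∑_T ∏_{{i,j}∈T} Q_{ij}`, summed over all
spanning trees of the complete graph on `{1, …, d}`. -/
noncomputable def tau {d : ℕ} (Q : Matrix (Fin d) (Fin d) ℝ) : ℝ :=
  ∑ T ∈ (univ : Finset (SimpleGraph (Fin d))).filter (fun T => T.IsTree),
    ∏ p ∈ univ.filter (fun p : Fin d × Fin d => p.1 < p.2 ∧ T.Adj p.1 p.2), Q p.1 p.2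

/-- The Cayley–Menger matrix of `Γ`. -/
noncomputable def CM {d : ℕ} (Γ : Matrix (Fin d) (Fin d) ℝ) :
    Matrix (Fin (d + 1)) (Fin (d + 1)) ℝ :=
  Matrix.of fun a b =>
    if ha : (a : ℕ) < d then
      (if hb : (b : ℕ) < d then -Γ ⟨a, ha⟩ ⟨b, hb⟩ / 2 else 1)
    else (if (b : ℕ) < d then -1 else 0)

/-- Membership in the cone `𝒞^d` of symmetric matrices with zero diagonal that are
strictly conditionally negative definite. -/
def memC {d : ℕ} (Γ : Matrix (Fin d) (Fin d) ℝ) : Prop :=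
  Γ.IsSymm ∧ (∀ i, Γ i i = 0) ∧
    ∀ x : Fin d → ℝ, x ≠ 0 → (∑ i, x i) = 0 → x ⬝ᵥ Γ.mulVec x < 0
/-- Coefficient of the triangle-inequality constraint `g_{ijk}` in the entry `(a,b)`:
`1` if `{a,b} = {i,j}`, `−1` if `{a,b} = {i,k}`, `−1` if `{a,b} = {j,k}`, `0` else. -/
noncomputable def triCoeff {d : ℕ} (i j k a b : Fin d) : ℝ :=
  if (a = i ∧ b = j) ∨ (a = j ∧ b = i) then 1
  else if (a = i ∧ b = k) ∨ (a = k ∧ b = i) then -1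
  else if (a = j ∧ b = k) ∨ (a = k ∧ b = j) then -1
  else 0

/-- The matrix `Q(η) = Q̂ + ∑_{(i,j,k)∈Ψ} η_{ijk} ∇_Γ g_{ijk}`. -/
noncomputable def Qeta {d : ℕ} (Qh : Matrix (Fin d) (Fin d) ℝ)
    (Ψ : Finset (Fin d × Fin d × Fin d)) (η : Fin d × Fin d × Fin d → ℝ) :
    Matrix (Fin d) (Fin d) ℝ :=
  Matrix.of fun a b => Qh a b + ∑ t ∈ Ψ, η t * triCoeff t.1 t.2.1 t.2.2 a b

/-- The Lagrangian of the step (S2) problem: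
`L(Γ, η) = ⟨Γ, Q̂⟩ − log det(CM(Γ)) + ∑_{(i,j,k)∈Ψ} η_{ijk}(Γ_{ij} − Γ_{ik} − Γ_{jk})`. -/
noncomputable def lagrangian {d : ℕ} (Qh : Matrix (Fin d) (Fin d) ℝ)
    (Ψ : Finset (Fin d × Fin d × Fin d)) (η : Fin d × Fin d × Fin d → ℝ)
    (Γ : Matrix (Fin d) (Fin d) ℝ) : ℝ :=
  sinner Γ Qh - Real.log ((CM Γ).det)
    + ∑ t ∈ Ψ, η t * (Γ t.1 t.2.1 - Γ t.1 t.2.2 - Γ t.2.1 t.2.2)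

/-- `v` reaches the root `0` under the parent map `f`. -/
inductive ReachRoot {n : ℕ} (f : Fin n → Fin (n + 1)) : Fin (n + 1) → Prop
  | zero : ReachRoot f 0
  | step (i : Fin n) : ReachRoot f (f i) → ReachRoot f i.succ

/-- The graph of a parent map. -/
def parentGraph {n : ℕ} (f : Fin n → Fin (n + 1)) : SimpleGraph (Fin (n + 1)) where
  Adj a b := a ≠ b ∧ ((∃ i : Fin n, a = i.succ ∧ b = f i) ∨ (∃ i : Fin n, b = i.succ ∧ a = f i))
  symm := ⟨fun a b h => ⟨h.1.symm, h.2.symm⟩⟩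
  loopless := ⟨fun a h => h.1 rfl⟩

lemma no_two_cycle {n : ℕ} {f : Fin n → Fin (n + 1)} {v : Fin (n + 1)} (h : ReachRoot f v) :
    ∀ i j : Fin n, v = i.succ → f i = j.succ → f j = i.succ → False := by
  induction h with
  | zero => intro i j h0; exact absurd h0.symm (Fin.succ_ne_zero i)
  | step k hk ih =>
    intro i j h0 h1 h2
    have : k = i := Fin.succ_injective _ h0
    subst this
    exact ih j k h1 h2 h1

lemma reach_fix_ne {n : ℕ} {f : Fin n → Fin (n + 1)} (hf : ∀ v, ReachRoot f v) (i : Fin n) :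
    f i ≠ i.succ := fun h => no_two_cycle (hf i.succ) i i rfl h h

lemma parent_unique_aux {n : ℕ} {f g : Fin n → Fin (n + 1)} (hf : ∀ v, ReachRoot f v)
    (hfg : parentGraph f = parentGraph g) {v : Fin (n + 1)} (h : ReachRoot f v) :
    ∀ i j : Fin n, v = f i → v = j.succ → g j = i.succ → False := by
  induction h with
  | zero => intro i j _ h0; exact absurd h0.symm (Fin.succ_ne_zero j)
  | step k hk ih =>
    intro i j h0 h1 h2
    have : k = j := Fin.succ_injective _ h1
    subst this
    have hadj : (parentGraph f).Adj k.succ (f k) :=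
      ⟨(reach_fix_ne hf k).symm, Or.inl ⟨k, rfl, rfl⟩⟩
    rw [hfg] at hadj
    rcases hadj.2 with ⟨l, hl1, hl2⟩ | ⟨l, hl1, hl2⟩
    · have : k = l := Fin.succ_injective _ hl1
      subst this
      exact no_two_cycle (hf k.succ) k i rfl (hl2.trans h2) h0.symm
    · exact ih k l rfl hl1 hl2.symm

lemma parent_unique {n : ℕ} {f g : Fin n → Fin (n + 1)} (hf : ∀ v, ReachRoot f v)
    (hfg : parentGraph f = parentGraph g) : f = g := by
  funext i
  by_contra hne
  have hadj : (parentGraph f).Adj i.succ (f i) :=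
    ⟨(reach_fix_ne hf i).symm, Or.inl ⟨i, rfl, rfl⟩⟩
  rw [hfg] at hadj
  rcases hadj.2 with ⟨l, hl1, hl2⟩ | ⟨l, hl1, hl2⟩
  · have : i = l := Fin.succ_injective _ hl1
    subst this
    exact hne hl2
  · exact parent_unique_aux hf hfg (hf (f i)) i l rfl hl1 hl2.symm

lemma parentGraph_connected {n : ℕ} {f : Fin n → Fin (n + 1)} (hf : ∀ v, ReachRoot f v) :
    (parentGraph f).Connected := by
  have key : ∀ v, ReachRoot f v → (parentGraph f).Reachable v 0 := by
    intro v h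
    induction h with
    | zero => exact SimpleGraph.Reachable.refl _
    | step i _ ih =>
      have hadj : (parentGraph f).Adj i.succ (f i) :=
        ⟨(reach_fix_ne hf i).symm, Or.inl ⟨i, rfl, rfl⟩⟩
      exact hadj.reachable.trans ih
  haveI : Nonempty (Fin (n + 1)) := ⟨0⟩
  exact SimpleGraph.Connected.mk fun u v => (key u (hf u)).trans (key v (hf v)).symm

lemma parent_edge_inj {n : ℕ} {f : Fin n → Fin (n + 1)} (hf : ∀ v, ReachRoot f v) {i j : Fin n}
    (h : s(i.succ, f i) = s(j.succ, f j)) : i = j := by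
  rcases Sym2.eq_iff.1 h with ⟨h1, _⟩ | ⟨h1, h2⟩
  · exact Fin.succ_injective _ h1
  · exact (no_two_cycle (hf i.succ) i j rfl h2 h1.symm).elim

lemma parentGraph_isTree {n : ℕ} {f : Fin n → Fin (n + 1)} (hf : ∀ v, ReachRoot f v) :
    (parentGraph f).IsTree := by
  rw [SimpleGraph.isTree_iff_connected_and_card]
  refine ⟨parentGraph_connected hf, ?_⟩
  have : (parentGraph f).edgeSet = Set.range (fun i : Fin n => s(i.succ, f i)) := by
    ext e
    induction e using Sym2.ind with
    | _ a b =>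
      simp only [SimpleGraph.mem_edgeSet, Set.mem_range]
      constructor
      · rintro ⟨_, ⟨i, rfl, rfl⟩ | ⟨i, rfl, rfl⟩⟩
        · exact ⟨i, rfl⟩
        · exact ⟨i, Sym2.eq_swap⟩
      · rintro ⟨i, hi⟩
        rw [← SimpleGraph.mem_edgeSet, ← hi, SimpleGraph.mem_edgeSet]
        exact ⟨(reach_fix_ne hf i).symm, Or.inl ⟨i, rfl, rfl⟩⟩
  rw [this, Nat.card_range_of_injective (fun i j h => parent_edge_inj hf h)]
  simp

lemma exists_parent {n : ℕ} {T : SimpleGraph (Fin (n + 1))} (hT : T.IsTree) :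
    ∃ f : Fin n → Fin (n + 1), (∀ v, ReachRoot f v) ∧ parentGraph f = T := by
  have h1 : ∀ i : Fin n, ∃ w, T.Adj i.succ w ∧ T.dist w 0 < T.dist i.succ 0 := by
    intro i
    obtain ⟨p, hp⟩ := hT.connected.exists_walk_length_eq_dist i.succ 0
    cases p with
    | cons h q =>
      refine ⟨_, h, ?_⟩
      rw [← hp, SimpleGraph.Walk.length_cons]
      exact Nat.lt_succ_of_le (SimpleGraph.dist_le q)
  choose f hf1 hf2 using h1
  have hf : ∀ k : ℕ, ∀ v, T.dist v 0 = k → ReachRoot f v := by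
    intro k
    induction k using Nat.strong_induction_on with
    | _ k ih =>
      intro v hv
      rcases Fin.eq_zero_or_eq_succ v with rfl | ⟨i, rfl⟩
      · exact ReachRoot.zero
      · exact ReachRoot.step i (ih _ (hv ▸ hf2 i) _ rfl)
  have hf' : ∀ v, ReachRoot f v := fun v => hf _ v rfl
  refine ⟨f, hf', ?_⟩
  have hle : parentGraph f ≤ T := by
    rintro a b ⟨_, ⟨i, rfl, rfl⟩ | ⟨i, rfl, rfl⟩⟩
    · exact hf1 i
    · exact (hf1 i).symm
  exact le_antisymm hle ((SimpleGraph.isTree_iff_minimal_connected.1 hT).2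
    (parentGraph_connected hf') hle)

lemma parent_prod {n : ℕ} {f : Fin n → Fin (n + 1)} (hf : ∀ v, ReachRoot f v)
    (Q : Matrix (Fin (n + 1)) (Fin (n + 1)) ℝ) (hQ : Q.IsSymm)
    (s : Finset (Fin (n + 1) × Fin (n + 1)))
    (hs : ∀ p, p ∈ s ↔ p.1 < p.2 ∧ (parentGraph f).Adj p.1 p.2) :
    ∏ i, Q i.succ (f i) = ∏ p ∈ s, Q p.1 p.2 := by
  refine Finset.prod_bij (fun i _ => (min i.succ (f i), max i.succ (f i))) ?_ ?_ ?_ ?_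
  · intro i _
    rw [hs]
    have hne := reach_fix_ne hf i
    have hadj : (parentGraph f).Adj i.succ (f i) := ⟨hne.symm, Or.inl ⟨i, rfl, rfl⟩⟩
    rcases lt_or_gt_of_ne hne with h | h
    · simp only [min_eq_right h.le, max_eq_left h.le]; exact ⟨h, hadj.symm⟩
    · simp only [min_eq_left h.le, max_eq_right h.le]; exact ⟨h, hadj⟩
  · intro i _ j _ h
    apply parent_edge_inj hf
    have h2 : ∀ a b : Fin (n + 1), s(min a b, max a b) = s(a, b) := by
      intro a b
      rcases le_total a b with h | h <;> simp [h, Sym2.eq_swap]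
    rw [Prod.mk.injEq] at h
    rw [← h2, h.1, h.2, h2]
  · rintro ⟨a, b⟩ hp
    rw [hs] at hp
    obtain ⟨hlt, _, ⟨i, rfl, rfl⟩ | ⟨i, rfl, rfl⟩⟩ := hp
    · exact ⟨i, Finset.mem_univ _, by simp only at hlt; simp [hlt.le]⟩
    · exact ⟨i, Finset.mem_univ _, by simp only at hlt; simp [hlt.le]⟩
  · intro i _
    rcases le_total i.succ (f i) with h | h
    · simp [h]
    · simp [h, hQ.apply]

/-- Rows of the rooted functional matrix. -/
def parentRow {n : ℕ} (i : Fin n) (v : Fin (n + 1)) : Fin n → ℝ :=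
  fun k => (if i = k then 1 else 0) - (if v = k.succ then 1 else 0)

lemma det_parent_one {n : ℕ} {f : Fin n → Fin (n + 1)} (hf : ∀ v, ReachRoot f v) :
    (Matrix.of fun i => parentRow i (f i)).det = 1 := by
  rw [← Matrix.det_transpose, Matrix.det_apply', Finset.sum_eq_single 1]
  · simp [parentRow, reach_fix_ne hf]
  · intro σ _ hσ
    by_contra hne
    apply hσ
    have h1 : ∀ i, σ i = i ∨ f i = (σ i).succ := by
      intro i
      by_contra hcon
      push Not at hcon
      apply hne
      apply mul_eq_zero_of_right
      apply Finset.prod_eq_zero (Finset.mem_univ i)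
      simp [parentRow, hcon.1.symm, hcon.2]
    have h2 : ∀ v, ReachRoot f v → ∀ i : Fin n, v = i.succ → σ i = i := by
      intro v hv
      induction hv with
      | zero => intro i h0; exact absurd h0.symm (Fin.succ_ne_zero i)
      | step k hk ih =>
        intro i h0
        have : k = i := Fin.succ_injective _ h0
        subst this
        rcases h1 k with h | h
        · exact h
        · exact σ.injective (ih _ h)
    ext i
    simp [h2 _ (hf i.succ) i rfl]
  · simp

lemma det_parent_zero {n : ℕ} {f : Fin n → Fin (n + 1)} (hf : ¬ ∀ v, ReachRoot f v) :
    (Matrix.of fun i => parentRow i (f i)).det = 0 := by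
  classical
  push Not at hf
  obtain ⟨v, hv⟩ := hf
  rcases Fin.eq_zero_or_eq_succ v with rfl | ⟨i, rfl⟩
  · exact absurd ReachRoot.zero hv
  rw [← Matrix.exists_mulVec_eq_zero_iff]
  refine ⟨fun j => if ReachRoot f j.succ then 0 else 1, ?_, ?_⟩
  · intro h
    have := congrFun h i
    simp [hv] at this
  · funext k
    simp only [Matrix.mulVec, dotProduct, Matrix.of_apply, parentRow, sub_mul, ite_mul, one_mul,
      zero_mul, Finset.sum_sub_distrib, Finset.sum_ite_eq, Finset.mem_univ, if_true, Pi.zero_apply]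
    have hiff : ReachRoot f k.succ ↔ ReachRoot f (f k) := by
      constructor
      · intro h
        generalize hw : k.succ = w at h
        cases h with
        | zero => exact absurd hw (Fin.succ_ne_zero k)
        | step l hl => rw [Fin.succ_injective _ hw]; exact hl
      · exact ReachRoot.step k
    rcases Fin.eq_zero_or_eq_succ (f k) with h | ⟨j, hj⟩
    · have : ReachRoot f k.succ := by rw [hiff, h]; exact ReachRoot.zero
      simp [this, h, (Fin.succ_ne_zero _).symm]
    · rw [hj] at hiff
      simp only [hj, Fin.succ_inj, Finset.sum_ite_eq, Finset.mem_univ, if_true, hiff, sub_self]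

/-- The weighted matrix-tree theorem. -/
lemma matrix_tree {n : ℕ} (Q : Matrix (Fin (n + 1)) (Fin (n + 1)) ℝ) (hQ : Q.IsSymm)
    (hQ0 : ∀ i, Q i i = 0) :
    ((thetaOf Q).submatrix Fin.succ Fin.succ).det = tau Q := by
  classical
  have hrow : (thetaOf Q).submatrix Fin.succ Fin.succ =
      fun i : Fin n => ∑ v : Fin (n + 1), Q i.succ v • parentRow i v := by
    funext i k
    simp only [Matrix.submatrix_apply, thetaOf, Matrix.of_apply, Finset.sum_apply, Pi.smul_apply,
      smul_eq_mul, parentRow, mul_sub, Finset.sum_sub_distrib, mul_ite, mul_one, mul_zero,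
      Finset.sum_ite_eq', Finset.mem_univ, if_true, Fin.succ_inj, Finset.sum_filter]
    by_cases h : i = k
    · subst h
      simp only [if_true, hQ0, sub_zero]
      refine Finset.sum_congr rfl fun l _ => ?_
      by_cases hl : l = i.succ
      · simp [hl, hQ0]
      · simp [hl]
    · simp [h]
  have hdet : ((thetaOf Q).submatrix Fin.succ Fin.succ).det =
      ∑ f : Fin n → Fin (n + 1), (∏ i, Q i.succ (f i)) *
        (Matrix.of fun i => parentRow i (f i)).det := by
    rw [hrow]
    have h1 := (Matrix.detRowAlternating (R := ℝ) (n := Fin n)).toMultilinearMap.map_sum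
      (fun i v => Q i.succ v • parentRow i v)
    refine h1.trans (Finset.sum_congr rfl fun f _ => ?_)
    exact (Matrix.detRowAlternating (R := ℝ) (n := Fin n)).toMultilinearMap.map_smul_univ
      (fun i => Q i.succ (f i)) (fun i => parentRow i (f i))
  rw [hdet, tau]
  have h2 : ∑ f : Fin n → Fin (n + 1), (∏ i, Q i.succ (f i)) *
        (Matrix.of fun i => parentRow i (f i)).det =
      ∑ f ∈ Finset.univ.filter (fun f : Fin n → Fin (n + 1) => ∀ v, ReachRoot f v),
        ∏ i, Q i.succ (f i) := by
    rw [Finset.sum_filter]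
    refine Finset.sum_congr rfl fun f _ => ?_
    split_ifs with h
    · rw [det_parent_one h, mul_one]
    · rw [det_parent_zero h, mul_zero]
  rw [h2]
  refine Finset.sum_bij (fun f _ => parentGraph f) ?_ ?_ ?_ ?_
  · intro f hf
    simp only [Finset.mem_filter, Finset.mem_univ, true_and] at hf ⊢
    exact parentGraph_isTree hf
  · intro f hf g _ h
    simp only [Finset.mem_filter, Finset.mem_univ, true_and] at hf
    exact parent_unique hf h
  · intro T hT
    simp only [Finset.mem_filter, Finset.mem_univ, true_and] at hT
    obtain ⟨f, hf, h⟩ := exists_parent hT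
    exact ⟨f, by simpa using hf, h⟩
  · intro f hf
    simp only [Finset.mem_filter, Finset.mem_univ, true_and] at hf
    exact parent_prod hf Q hQ _ (by simp)

lemma logdet_single {n : ℕ} {C : Matrix (Fin n) (Fin n) ℝ} (hC : C.PosDef) :
    (n : ℝ) ≤ C.trace - Real.log C.det ∧
      (C.trace - Real.log C.det = n → C = 1) := by
  have hpos := hC.eigenvalues_pos
  have htr : C.trace = ∑ i, hC.1.eigenvalues i := by
    simpa using hC.1.trace_eq_sum_eigenvalues
  have hdet : Real.log C.det = ∑ i, Real.log (hC.1.eigenvalues i) := by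
    rw [hC.1.det_eq_prod_eigenvalues]
    simp only [RCLike.ofReal_real_eq_id, id]
    exact Real.log_prod (fun i _ => (hpos i).ne')
  have hn : (n : ℝ) = ∑ _i : Fin n, (1 : ℝ) := by simp
  have hle : ∀ i ∈ (Finset.univ : Finset (Fin n)),
      (1 : ℝ) ≤ hC.1.eigenvalues i - Real.log (hC.1.eigenvalues i) := by
    intro i _
    have := Real.log_le_sub_one_of_pos (hpos i)
    linarith
  rw [htr, hdet, ← Finset.sum_sub_distrib]
  refine ⟨?_, ?_⟩
  · rw [hn]
    exact Finset.sum_le_sum hle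
  · intro h
    rw [hn] at h
    have h1 := (Finset.sum_eq_sum_iff_of_le hle).1 h.symm
    have h2 : ∀ i, hC.1.eigenvalues i = 1 := by
      intro i
      by_contra hne
      have := Real.log_lt_sub_one_of_pos (hpos i) hne
      have := h1 i (Finset.mem_univ i)
      linarith
    have h3 : hC.1.eigenvalues = fun _ => 1 := funext h2
    have h4 := hC.1.spectral_theorem
    rw [h3] at h4
    rw [h4]
    have : (diagonal (RCLike.ofReal ∘ fun _ : Fin n => (1 : ℝ)) : Matrix (Fin n) (Fin n) ℝ) = 1 := by
      ext i j; simp [Matrix.diagonal, Matrix.one_apply]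
    rw [this, map_one]

open scoped MatrixOrder in
lemma logdet_pair {n : ℕ} {A B : Matrix (Fin n) (Fin n) ℝ} (hA : A.PosDef) (hB : B.PosDef) :
    (n : ℝ) + Real.log A.det ≤ (A * B).trace - Real.log B.det ∧
      ((A * B).trace - Real.log B.det = n + Real.log A.det → A * B = 1) := by
  obtain ⟨M, hM, hAM⟩ := CStarAlgebra.isStrictlyPositive_iff_eq_star_mul_self.mp
    hA.isStrictlyPositive
  have hC : (M * B * star M).PosDef := (Matrix.IsUnit.posDef_star_right_conjugate_iff hM).2 hB
  have htr : (M * B * star M).trace = (A * B).trace := by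
    rw [hAM, Matrix.trace_mul_comm, ← mul_assoc]
  have hdet : (M * B * star M).det = A.det * B.det := by
    rw [hAM, Matrix.det_mul, Matrix.det_mul, Matrix.det_mul]; ring
  have hlog : Real.log (M * B * star M).det = Real.log A.det + Real.log B.det := by
    rw [hdet, Real.log_mul hA.det_pos.ne' hB.det_pos.ne']
  obtain ⟨h1, h2⟩ := logdet_single hC
  rw [htr, hlog] at h1 h2
  refine ⟨by linarith, fun h => ?_⟩
  have h3 := h2 (by linarith)
  have h4 : (M * B) * star M = 1 := h3
  have h5 : star M * (M * B) = 1 := mul_eq_one_comm.1 h4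
  rw [hAM, mul_assoc, h5]

/-- The reduced covariance matrix of a variogram. -/
noncomputable def redB {n : ℕ} (Γ : Matrix (Fin (n + 1)) (Fin (n + 1)) ℝ) :
    Matrix (Fin n) (Fin n) ℝ :=
  Matrix.of fun i j => (Γ i.succ 0 + Γ 0 j.succ - Γ i.succ j.succ) / 2

/-- The embedding into sum-zero vectors. -/
def ext0 {n : ℕ} (y : Fin n → ℝ) : Fin (n + 1) → ℝ := Fin.cons (-∑ i, y i) y

lemma ext0_sum {n : ℕ} (y : Fin n → ℝ) : ∑ i, ext0 y i = 0 := by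
  simp [Fin.sum_univ_succ, ext0]

lemma ext0_ne {n : ℕ} {y : Fin n → ℝ} (hy : y ≠ 0) : ext0 y ≠ 0 := by
  intro h
  apply hy
  funext i
  simpa [ext0] using congrFun h i.succ

lemma theta_row_sum {d : ℕ} (Q : Matrix (Fin d) (Fin d) ℝ) (i : Fin d) :
    ∑ j, thetaOf Q i j = 0 := by
  classical
  rw [← Finset.add_sum_erase _ _ (Finset.mem_univ i)]
  have h1 : thetaOf Q i i = ∑ l ∈ univ.erase i, Q i l := by
    simp only [thetaOf, Matrix.of_apply, if_true]
    refine Finset.sum_congr ?_ fun _ _ => rfl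
    ext l; simp
  have h2 : ∑ j ∈ univ.erase i, thetaOf Q i j = ∑ j ∈ univ.erase i, - Q i j := by
    refine Finset.sum_congr rfl fun j hj => ?_
    simp [thetaOf, (Finset.ne_of_mem_erase hj).symm]
  rw [h1, h2, Finset.sum_neg_distrib, add_neg_cancel]

lemma theta_symm {d : ℕ} {Q : Matrix (Fin d) (Fin d) ℝ} (hQ : Q.IsSymm) :
    (thetaOf Q).IsSymm := by
  ext i j
  simp only [Matrix.transpose_apply, thetaOf, Matrix.of_apply]
  by_cases h : i = j
  · subst h; rfl
  · rw [if_neg h, if_neg (Ne.symm h), hQ.apply]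

lemma theta_off {d : ℕ} {Q : Matrix (Fin d) (Fin d) ℝ} (Γ : Matrix (Fin d) (Fin d) ℝ)
    (hQ0 : ∀ i, Q i i = 0) (hG0 : ∀ i, Γ i i = 0) (i j : Fin d) :
    thetaOf Q i j * Γ i j = - (Γ i j * Q i j) := by
  by_cases h : i = j
  · subst h; simp [hQ0, hG0]
  · simp [thetaOf, h, mul_comm]

lemma sinner_eq {d : ℕ} {A B : Matrix (Fin d) (Fin d) ℝ} (hA : A.IsSymm) (hA0 : ∀ i, A i i = 0)
    (hB : B.IsSymm) : ∑ i, ∑ j, A i j * B i j = 2 * sinner A B := by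
  have h1 : ∑ i, ∑ j, A i j * B i j = ∑ p : Fin d × Fin d, A p.1 p.2 * B p.1 p.2 :=
    (Fintype.sum_prod_type (fun p : Fin d × Fin d => A p.1 p.2 * B p.1 p.2)).symm
  have hsw : ∑ p ∈ univ.filter (fun p : Fin d × Fin d => p.2 < p.1), A p.1 p.2 * B p.1 p.2 =
      sinner A B := by
    unfold sinner
    refine Finset.sum_bij (fun p _ => (p.2, p.1)) ?_ ?_ ?_ ?_
    · intro p hp; simpa using hp
    · rintro ⟨a, b⟩ _ ⟨c, e⟩ _ h; simp at h; simp [h]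
    · rintro ⟨a, b⟩ hp; exact ⟨(b, a), by simpa using hp, rfl⟩
    · intro p _; simp only [hA.apply, hB.apply]
  have h2 : ∀ p : Fin d × Fin d, A p.1 p.2 * B p.1 p.2 =
      (if p.1 < p.2 then A p.1 p.2 * B p.1 p.2 else 0) +
      (if p.2 < p.1 then A p.1 p.2 * B p.1 p.2 else 0) := by
    rintro ⟨a, b⟩
    rcases lt_trichotomy a b with h | h | h
    · simp [h, h.not_gt]
    · subst h; simp [hA0]
    · simp [h, h.not_gt]
  rw [h1, Finset.sum_congr rfl (fun p _ => h2 p), Finset.sum_add_distrib, ← Finset.sum_filter,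
    ← Finset.sum_filter, hsw]
  unfold sinner
  ring

lemma trace_red {n : ℕ} {Q Γ : Matrix (Fin (n + 1)) (Fin (n + 1)) ℝ} (hQ : Q.IsSymm)
    (hQ0 : ∀ i, Q i i = 0) (hG : Γ.IsSymm) (hG0 : ∀ i, Γ i i = 0) :
    ((thetaOf Q).submatrix Fin.succ Fin.succ * redB Γ).trace = sinner Γ Q := by
  have h1 : ((thetaOf Q).submatrix Fin.succ Fin.succ * redB Γ).trace =
      ∑ i, ∑ j, thetaOf Q i j * ((Γ i 0 + Γ j 0 - Γ i j) / 2) := by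
    rw [Fin.sum_univ_succ]
    have : ∑ j, thetaOf Q 0 j * ((Γ 0 0 + Γ j 0 - Γ 0 j) / 2) = 0 := by
      refine Finset.sum_eq_zero fun j _ => ?_
      rw [hG0, hG.apply]; ring
    rw [this, zero_add]
    simp only [Matrix.trace, Matrix.diag, Matrix.mul_apply, Matrix.submatrix_apply, redB,
      Matrix.of_apply]
    refine Finset.sum_congr rfl fun i _ => ?_
    rw [Fin.sum_univ_succ]
    simp only [hG0, add_zero, sub_self, zero_div, mul_zero, zero_add]
    refine Finset.sum_congr rfl fun j _ => ?_
    have e1 := hG.apply i.succ 0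
    have e2 := hG.apply i.succ j.succ
    rw [e1, e2]
    ring
  have h2 : ∑ i, ∑ j, thetaOf Q i j * Γ i 0 = 0 := by
    refine Finset.sum_eq_zero fun i _ => ?_
    rw [← Finset.sum_mul, theta_row_sum, zero_mul]
  have h3 : ∑ i, ∑ j, thetaOf Q i j * Γ j 0 = 0 := by
    rw [Finset.sum_comm]
    refine Finset.sum_eq_zero fun i _ => ?_
    rw [← Finset.sum_mul]
    simp_rw [(theta_symm hQ).apply i]
    rw [theta_row_sum, zero_mul]
  have h4 : ∑ i, ∑ j, thetaOf Q i j * Γ i j = - (2 * sinner Γ Q) := by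
    simp_rw [theta_off Γ hQ0 hG0, Finset.sum_neg_distrib]
    rw [sinner_eq hG hG0 hQ]
  rw [h1]
  have h5 : ∀ i j, thetaOf Q i j * ((Γ i 0 + Γ j 0 - Γ i j) / 2) =
      (1/2) * (thetaOf Q i j * Γ i 0) + (1/2) * (thetaOf Q i j * Γ j 0)
        - (1/2) * (thetaOf Q i j * Γ i j) := by intros; ring
  simp_rw [h5, Finset.sum_sub_distrib, Finset.sum_add_distrib, ← Finset.mul_sum]
  rw [h2, h3, h4]; ring

lemma det_CM {n : ℕ} {Γ : Matrix (Fin (n + 1)) (Fin (n + 1)) ℝ} (hG0 : ∀ i, Γ i i = 0) :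
    (CM Γ).det = (redB Γ).det := by
  let φ : Fin n ⊕ Fin 2 → Fin (n + 2) :=
    Sum.elim (fun i => i.succ.castSucc) ![0, Fin.last (n + 1)]
  have hφ : Function.Bijective φ := by
    rw [Fintype.bijective_iff_injective_and_card]
    refine ⟨?_, by simp⟩
    rintro (i | i) (j | j) h
    · simpa [φ] using h
    · exfalso
      fin_cases j
      · have := congrArg Fin.val h; simp [φ] at this
      · have := congrArg Fin.val h; simp [φ] at this; omega
    · exfalso
      fin_cases i
      · have := congrArg Fin.val h; simp [φ] at this
      · have := congrArg Fin.val h; simp [φ] at this; omega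
    · fin_cases i <;> fin_cases j <;> first | rfl | (have := congrArg Fin.val h; simp [φ] at this)
  let e := Equiv.ofBijective φ hφ
  rw [← Matrix.det_submatrix_equiv_self e (CM Γ)]
  let D : Matrix (Fin 2) (Fin 2) ℝ := !![0, 1; -1, 0]
  let Di : Matrix (Fin 2) (Fin 2) ℝ := !![0, -1; 1, 0]
  let K : Matrix (Fin n) (Fin n) ℝ := Matrix.of fun i j => -Γ i.succ j.succ / 2
  let V : Matrix (Fin n) (Fin 2) ℝ := Matrix.of fun i => ![-Γ i.succ 0 / 2, 1]
  let W : Matrix (Fin 2) (Fin n) ℝ := Matrix.of fun a j => ![-Γ 0 j.succ / 2, -1] a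
  have hD1 : D * Di = 1 := by ext i j; fin_cases i <;> fin_cases j <;> simp [D, Di]
  have hD2 : Di * D = 1 := mul_eq_one_comm.1 hD1
  letI : Invertible D := ⟨Di, hD2, hD1⟩
  have hblock : (CM Γ).submatrix e e = Matrix.fromBlocks K V W D := by
    have e1 : ∀ i, e (Sum.inl i) = i.succ.castSucc := fun _ => rfl
    have e2 : e (Sum.inr 0) = 0 := rfl
    have e3 : e (Sum.inr 1) = Fin.last (n + 1) := rfl
    ext a b
    rcases a with i | i <;> rcases b with j | j
    · simp [CM, K, e1]; rfl
    · fin_cases j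
      · simp [CM, V, e1, e2]; rfl
      · simp [CM, V, e1, e3]
    · fin_cases i
      · simp [CM, W, e1, e2]; rfl
      · simp [CM, W, e1, e3]
    · fin_cases i <;> fin_cases j <;> simp [CM, D, e2, e3, hG0]
  rw [hblock, Matrix.det_fromBlocks₂₂]
  have hdD : D.det = 1 := by simp [D, Matrix.det_fin_two]
  rw [hdD, one_mul]
  congr 1
  have : ⅟D = Di := rfl
  rw [this]
  ext i j
  simp [K, V, W, Di, redB, Matrix.mul_apply, Fin.sum_univ_two]
  ring

lemma ext0_quad {n : ℕ} {M : Matrix (Fin (n + 1)) (Fin (n + 1)) ℝ} (y : Fin n → ℝ) :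
    ext0 y ⬝ᵥ M.mulVec (ext0 y) = ∑ i, ∑ j, y i * y j *
      (M i.succ j.succ - M i.succ 0 - M 0 j.succ + M 0 0) := by
  simp only [dotProduct, Matrix.mulVec, Fin.sum_univ_succ, ext0, Fin.cons_zero, Fin.cons_succ]
  have h : ∀ i j : Fin n, y i * y j * (M i.succ j.succ - M i.succ 0 - M 0 j.succ + M 0 0) =
    y i * (M i.succ j.succ * y j) - y i * M i.succ 0 * y j - y i * (M 0 j.succ * y j)
      + y i * (M 0 0 * y j) := by intros; ring
  have hR : ∑ i, ∑ j, y i * y j * (M i.succ j.succ - M i.succ 0 - M 0 j.succ + M 0 0) =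
      ∑ i, y i * ∑ j, M i.succ j.succ * y j - (∑ i, y i * M i.succ 0) * ∑ j, y j
        - (∑ i, y i) * ∑ j, M 0 j.succ * y j + (∑ i, y i) * (M 0 0 * ∑ j, y j) := by
    simp_rw [h, Finset.sum_add_distrib, Finset.sum_sub_distrib, ← Finset.mul_sum, ← Finset.sum_mul]
  have hL : ∑ i, y i * (M i.succ 0 * -∑ j, y j + ∑ j, M i.succ j.succ * y j) =
      -((∑ i, y i * M i.succ 0) * ∑ j, y j) + ∑ i, y i * ∑ j, M i.succ j.succ * y j := by
    generalize ∑ j, y j = Y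
    rw [← mul_neg, Finset.sum_mul, ← Finset.sum_add_distrib]
    exact Finset.sum_congr rfl fun i _ => by ring
  rw [hR, hL]
  ring

lemma quad_double {n : ℕ} (B : Matrix (Fin n) (Fin n) ℝ) (y : Fin n → ℝ) :
    y ⬝ᵥ B.mulVec y = ∑ i, ∑ j, y i * y j * B i j := by
  simp only [dotProduct, Matrix.mulVec, Finset.mul_sum]
  exact Finset.sum_congr rfl fun i _ => Finset.sum_congr rfl fun j _ => by ring

lemma redB_posDef {n : ℕ} {Γ : Matrix (Fin (n + 1)) (Fin (n + 1)) ℝ} (h : memC Γ) :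
    (redB Γ).PosDef := by
  obtain ⟨hs, h0, hneg⟩ := h
  refine Matrix.PosDef.of_dotProduct_mulVec_pos ?_ ?_
  · ext i j
    simp only [Matrix.conjTranspose_apply, redB, Matrix.of_apply, star_trivial]
    rw [hs.apply j.succ i.succ, hs.apply j.succ 0, ← hs.apply i.succ 0]
    ring
  · intro y hy
    have := hneg (ext0 y) (ext0_ne hy) (ext0_sum y)
    rw [ext0_quad] at this
    rw [star_trivial, quad_double]
    have h2 : ∑ i, ∑ j, y i * y j * redB Γ i j = -(1/2) * ∑ i, ∑ j, y i * y j *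
      (Γ i.succ j.succ - Γ i.succ 0 - Γ 0 j.succ + Γ 0 0) := by
      simp_rw [Finset.mul_sum]
      refine Finset.sum_congr rfl fun i _ => Finset.sum_congr rfl fun j _ => ?_
      simp only [redB, Matrix.of_apply, h0]; ring
    rw [h2]; linarith

lemma theta_quad {n : ℕ} {Q : Matrix (Fin (n + 1)) (Fin (n + 1)) ℝ} (hQ : Q.IsSymm)
    (x : Fin (n + 1) → ℝ) (c : ℝ) :
    (thetaOf Q).mulVec (fun i => x i + c) = (thetaOf Q).mulVec x := by
  funext i
  simp only [Matrix.mulVec, dotProduct, mul_add, Finset.sum_add_distrib, ← Finset.sum_mul,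
    theta_row_sum, zero_mul, add_zero]

lemma redA_posDef {n : ℕ} {Q : Matrix (Fin (n + 1)) (Fin (n + 1)) ℝ} (h : memQ Q) :
    ((thetaOf Q).submatrix Fin.succ Fin.succ).PosDef := by
  obtain ⟨hs, h0, hpos⟩ := h
  refine Matrix.PosDef.of_dotProduct_mulVec_pos ?_ ?_
  · ext i j
    simp only [Matrix.conjTranspose_apply, Matrix.submatrix_apply, star_trivial]
    exact (theta_symm hs).apply _ _
  · intro y hy
    -- centre the vector (0, y)
    let z : Fin (n + 1) → ℝ := Fin.cons 0 y
    let c : ℝ := -(∑ i, z i) / (n + 1)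
    have hn : ((n : ℝ) + 1) ≠ 0 := by positivity
    have hsum : ∑ i, (z i + c) = 0 := by
      rw [Finset.sum_add_distrib]
      simp only [Finset.sum_const, Finset.card_univ, Fintype.card_fin, nsmul_eq_mul, c]
      push_cast
      field_simp
      ring
    have hne : (fun i => z i + c) ≠ 0 := by
      intro hz
      have hc := congrFun hz 0
      simp only [z, Fin.cons_zero, Pi.zero_apply, zero_add] at hc
      apply hy
      funext i
      have := congrFun hz i.succ
      simp only [z, Fin.cons_succ, Pi.zero_apply] at this ⊢
      linarith
    have := hpos _ hne hsum
    rw [theta_quad hs] at this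
    have h2 : (fun i => z i + c) ⬝ᵥ (thetaOf Q).mulVec z = z ⬝ᵥ (thetaOf Q).mulVec z := by
      rw [Matrix.dotProduct_mulVec, ← Matrix.mulVec_transpose, (theta_symm hs).eq, theta_quad hs,
        dotProduct_comm]
    rw [h2] at this
    have h3 : z ⬝ᵥ (thetaOf Q).mulVec z =
        star y ⬝ᵥ ((thetaOf Q).submatrix Fin.succ Fin.succ).mulVec y := by
      simp [dotProduct, Matrix.mulVec, Fin.sum_univ_succ, z]
    rwa [h3] at this

lemma gamma_memC {d : ℕ} (hd : 0 < d) {Q S : Matrix (Fin d) (Fin d) ℝ} (hQ : memQ Q)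
    (hS : isSigmaOf Q S) : memC (gammaOf S) := by
  obtain ⟨hs, h1, hP⟩ := hS
  refine ⟨?_, ?_, ?_⟩
  · ext i j
    simp only [Matrix.transpose_apply, gammaOf, Matrix.of_apply]
    rw [hs.apply i j]; ring
  · intro i; simp only [gammaOf, Matrix.of_apply]; ring
  · intro x hx hx0
    have hquad : x ⬝ᵥ (gammaOf S).mulVec x = -2 * (x ⬝ᵥ S.mulVec x) := by
      rw [quad_double, quad_double]
      have h : ∀ i j, x i * x j * gammaOf S i j =
          (x i * S i i) * x j + x i * (x j * S j j) + (-2) * (x i * x j * S i j) := by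
        intros; simp only [gammaOf, Matrix.of_apply]; ring
      simp_rw [h, Finset.sum_add_distrib, ← Finset.mul_sum, ← Finset.sum_mul, hx0]
      simp
    have hPx : (Pmat d).mulVec x = x := by
      funext i
      simp [Pmat, Matrix.mulVec, dotProduct, sub_mul, Finset.sum_sub_distrib, ← Finset.mul_sum, hx0,
        Matrix.one_apply]
    have hTS : (thetaOf Q).mulVec (S.mulVec x) = x := by
      rw [Matrix.mulVec_mulVec, hP, hPx]
    have hne : S.mulVec x ≠ 0 := by
      intro h; rw [h, Matrix.mulVec_zero] at hTS; exact hx hTS.symm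
    have hsum : ∑ i, S.mulVec x i = 0 := by
      have : ∑ i, S.mulVec x i = (fun _ => (1 : ℝ)) ⬝ᵥ S.mulVec x := by simp [dotProduct]
      rw [this, Matrix.dotProduct_mulVec, ← Matrix.mulVec_transpose, hs.eq, h1, zero_dotProduct]
    have := hQ.2.2 _ hne hsum
    rw [hTS, dotProduct_comm] at this
    rw [hquad]; linarith

lemma red_mul_gamma {n : ℕ} {Q S : Matrix (Fin (n + 1)) (Fin (n + 1)) ℝ}
    (hS : isSigmaOf Q S) :
    (thetaOf Q).submatrix Fin.succ Fin.succ * redB (gammaOf S) = 1 := by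
  obtain ⟨hs, h1, hP⟩ := hS
  ext i k
  have hB : ∀ j : Fin n, redB (gammaOf S) j k =
      S j.succ k.succ - S j.succ 0 + (S 0 0 - S 0 k.succ) := by
    intro j; simp only [redB, gammaOf, Matrix.of_apply]; ring
  have h2 : ((thetaOf Q).submatrix Fin.succ Fin.succ * redB (gammaOf S)) i k =
      ∑ j, thetaOf Q i.succ j * (S j k.succ - S j 0 + (S 0 0 - S 0 k.succ)) := by
    rw [Fin.sum_univ_succ, Matrix.mul_apply]
    simp only [hB, Matrix.submatrix_apply]
    ring
  have h3 : ∀ a b, ∑ j, thetaOf Q a j * S j b = Pmat (n + 1) a b := by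
    intro a b; rw [← hP, Matrix.mul_apply]
  rw [h2]
  simp_rw [mul_add, mul_sub (thetaOf Q i.succ _) (S _ k.succ), Finset.sum_add_distrib,
    Finset.sum_sub_distrib, ← Finset.sum_mul]
  rw [h3, h3, theta_row_sum]
  simp [Pmat, Matrix.one_apply]

lemma redB_inj {n : ℕ} {Γ Δ : Matrix (Fin (n + 1)) (Fin (n + 1)) ℝ} (hG : memC Γ) (hD : memC Δ)
    (h : redB Γ = redB Δ) : Γ = Δ := by
  have key : ∀ {Γ : Matrix (Fin (n + 1)) (Fin (n + 1)) ℝ}, memC Γ → ∀ i, redB Γ i i = Γ i.succ 0 := by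
    intro Γ hG i
    simp only [redB, Matrix.of_apply, hG.2.1]
    rw [hG.1.apply i.succ 0]; ring
  have h0 : ∀ i : Fin n, Γ i.succ 0 = Δ i.succ 0 := by
    intro i; rw [← key hG, ← key hD, h]
  have h0' : ∀ i : Fin n, Γ 0 i.succ = Δ 0 i.succ := by
    intro i; rw [hG.1.apply i.succ 0, hD.1.apply i.succ 0, h0]
  ext i j
  rcases Fin.eq_zero_or_eq_succ i with rfl | ⟨i, rfl⟩ <;>
    rcases Fin.eq_zero_or_eq_succ j with rfl | ⟨j, rfl⟩
  · rw [hG.2.1, hD.2.1]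
  · exact h0' j
  · exact h0 i
  · have := congrFun (congrFun h i) j
    simp only [redB, Matrix.of_apply, h0, h0'] at this
    linarith

lemma triCoeff_eq {d : ℕ} {i j k : Fin d} (hij : i ≠ j) (hik : i ≠ k) (hjk : j ≠ k) (a b : Fin d) :
    triCoeff i j k a b =
      ((if a = i then if b = j then 1 else 0 else 0) + (if a = j then if b = i then 1 else 0 else 0))
      - ((if a = i then if b = k then 1 else 0 else 0)
        + (if a = k then if b = i then 1 else 0 else 0))
      - ((if a = j then if b = k then 1 else 0 else 0)
        + (if a = k then if b = j then 1 else 0 else 0)) := by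
  unfold triCoeff
  grind

lemma tri_symm {d : ℕ} (i j k a b : Fin d) : triCoeff i j k a b = triCoeff i j k b a := by
  unfold triCoeff
  grind

lemma lagrangian_eq {d : ℕ} {Qh : Matrix (Fin d) (Fin d) ℝ}
    {Ψ : Finset (Fin d × Fin d × Fin d)}
    (hΨ : ∀ t ∈ Ψ, t.1 ≠ t.2.1 ∧ t.1 ≠ t.2.2 ∧ t.2.1 ≠ t.2.2)
    {η : Fin d × Fin d × Fin d → ℝ} {Γ : Matrix (Fin d) (Fin d) ℝ}
    (hG : Γ.IsSymm) (hG0 : ∀ i, Γ i i = 0) :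
    lagrangian Qh Ψ η Γ = sinner Γ (Qeta Qh Ψ η) - Real.log (CM Γ).det := by
  have h1 : ∀ t ∈ Ψ, sinner Γ (Matrix.of fun a b => triCoeff t.1 t.2.1 t.2.2 a b) =
      Γ t.1 t.2.1 - Γ t.1 t.2.2 - Γ t.2.1 t.2.2 := by
    rintro ⟨i, j, k⟩ ht
    obtain ⟨hij, hik, hjk⟩ := hΨ _ ht
    simp only at hij hik hjk ⊢
    have h := sinner_eq (B := Matrix.of fun a b => triCoeff i j k a b) hG hG0 (by
      ext a b; simp only [Matrix.transpose_apply, Matrix.of_apply]; exact tri_symm _ _ _ _ _)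
    generalize hs : sinner Γ (Matrix.of fun a b => triCoeff i j k a b) = s at h ⊢
    simp only [Matrix.of_apply, triCoeff_eq hij hik hjk, mul_sub, mul_add, mul_ite, mul_one,
      mul_zero, Finset.sum_sub_distrib, Finset.sum_add_distrib, Finset.sum_ite_irrel,
      Finset.sum_ite_eq', Finset.sum_const_zero, Finset.mem_univ, if_true] at h
    rw [hG.apply i j, hG.apply i k, hG.apply j k] at h
    linarith
  have h2 : sinner Γ (Qeta Qh Ψ η) = sinner Γ Qh +
      ∑ t ∈ Ψ, η t * sinner Γ (Matrix.of fun a b => triCoeff t.1 t.2.1 t.2.2 a b) := by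
    simp only [sinner, Qeta, Matrix.of_apply, mul_add, Finset.sum_add_distrib, Finset.mul_sum]
    rw [Finset.sum_comm]
    congr 1
    exact Finset.sum_congr rfl fun t _ => Finset.sum_congr rfl fun p _ => by ring
  have h3 : ∑ t ∈ Ψ, η t * sinner Γ (Matrix.of fun a b => triCoeff t.1 t.2.1 t.2.2 a b) =
      ∑ t ∈ Ψ, η t * (Γ t.1 t.2.1 - Γ t.1 t.2.2 - Γ t.2.1 t.2.2) :=
    Finset.sum_congr rfl fun t ht => by rw [h1 t ht]
  rw [lagrangian, h2, h3]
  ring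

/-- For nonnegative multipliers `η` with `Q(η) ∈ 𝒬`, the Lagrangian `L(·, η)` attains
its infimum over the cone `𝒞^d` uniquely at `Γ(Q(η))`, with value
`log τ(Q(η)) + (d − 1)`. -/
theorem lagrangian_inf {d : ℕ} (hd : 0 < d)
    (Qh : Matrix (Fin d) (Fin d) ℝ)
    (hQhsym : Qh.IsSymm) (hQhdiag : ∀ i, Qh i i = 0)
    (Ψ : Finset (Fin d × Fin d × Fin d))
    (hΨ : ∀ t ∈ Ψ, t.1 ≠ t.2.1 ∧ t.1 ≠ t.2.2 ∧ t.2.1 ≠ t.2.2)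
    (η : Fin d × Fin d × Fin d → ℝ) (hη : ∀ t ∈ Ψ, 0 ≤ η t)
    (hQη : memQ (Qeta Qh Ψ η))
    (S : Matrix (Fin d) (Fin d) ℝ) (hS : isSigmaOf (Qeta Qh Ψ η) S) :
    memC (gammaOf S) ∧
    (∀ Γ, memC Γ → lagrangian Qh Ψ η (gammaOf S) ≤ lagrangian Qh Ψ η Γ) ∧
    (∀ Γ, memC Γ → lagrangian Qh Ψ η Γ = lagrangian Qh Ψ η (gammaOf S) →
      Γ = gammaOf S) ∧
    lagrangian Qh Ψ η (gammaOf S) = Real.log (tau (Qeta Qh Ψ η)) + ((d : ℝ) - 1) := by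
  obtain ⟨n, rfl⟩ : ∃ n, d = n + 1 := ⟨d - 1, by omega⟩
  have hC := gamma_memC hd hQη hS
  have hA := redA_posDef hQη
  have hAB := red_mul_gamma hS
  have hL : ∀ Γ, memC Γ → lagrangian Qh Ψ η Γ =
      ((thetaOf (Qeta Qh Ψ η)).submatrix Fin.succ Fin.succ * redB Γ).trace
        - Real.log (redB Γ).det := by
    intro Γ hΓ
    rw [lagrangian_eq hΨ hΓ.1 hΓ.2.1, trace_red hQη.1 hQη.2.1 hΓ.1 hΓ.2.1, det_CM hΓ.2.1]
  have hval : lagrangian Qh Ψ η (gammaOf S) =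
      n + Real.log ((thetaOf (Qeta Qh Ψ η)).submatrix Fin.succ Fin.succ).det := by
    have hdet := congrArg Matrix.det hAB
    rw [Matrix.det_mul, Matrix.det_one] at hdet
    have hlog := congrArg Real.log hdet
    rw [Real.log_mul hA.det_pos.ne' (redB_posDef hC).det_pos.ne', Real.log_one] at hlog
    rw [hL _ hC, hAB, Matrix.trace_one, Fintype.card_fin]
    linarith
  refine ⟨hC, ?_, ?_, ?_⟩
  · intro Γ hΓ
    rw [hval, hL Γ hΓ]
    exact (logdet_pair hA (redB_posDef hΓ)).1
  · intro Γ hΓ h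
    rw [hval, hL Γ hΓ] at h
    have h1 := (logdet_pair hA (redB_posDef hΓ)).2 h
    refine redB_inj hΓ hC ?_
    exact (left_inv_eq_right_inv (mul_eq_one_comm.1 h1) hAB)
  · rw [hval, matrix_tree _ hQη.1 hQη.2.1]
    push_cast
    ring
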